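/- arXiv:2305.02953 — 2 statements merged into one kernel-verified Lean document; each statement's English description precedes it below -/
import Mathlib

section
/- Let H be a group such that the cardinality of H has uncountable cofinality. If H is strongly bounded and Jónsson, then for every subset Y ⊆ H with |Y| = |H| there exists a natural number n_Y such that H = Y^{[n_Y]}. -/
/-- `wordSet Y n` is the set `Y^{[n]}` of all products of length at most `n`
of elements of `Y` and their inverses. -/
def wordSet {H : Type*} [Group H] (Y : Set H) (n : ℕ) : Set H :=
  {h | ∃ m : ℕ, m ≤ n ∧ ∃ g : Fin m → H,
    (∀ i, g i ∈ Y ∨ (g i)⁻¹ ∈ Y) ∧ h = (List.ofFn g).prod}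

/-- A subgroup `K` of `G` is malnormal if `K ∩ gKg⁻¹ = {1}` for all `g ∉ K`. -/
def Malnormal {G : Type*} [Group G] (K : Subgroup G) : Prop :=
  ∀ g : G, g ∉ K → ∀ y : G, y ∈ K → g⁻¹ * y * g ∈ K → y = 1

/-- A group is strongly bounded if every action by isometries on a metric
space has bounded orbits. -/
def StronglyBounded (H : Type*) [Group H] : Prop :=
  ∀ (X : Type) (_ : MetricSpace X) (_ : MulAction H X),
    (∀ h : H, Isometry (fun x : X => h • x)) →
    ∀ x : X, Bornology.IsBounded (MulAction.orbit H x)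

/-- A group is Jónsson if every proper subgroup has strictly smaller cardinality. -/
def Jonsson (H : Type*) [Group H] : Prop :=
  ∀ K : Subgroup H, K ≠ ⊤ → Cardinal.mk K < Cardinal.mk H

/-! In a Jónsson group every subset `Y` of full cardinality generates. Word length with respect
to `Y` is then a norm, and left translations are isometries of the metric it induces. By strong
boundedness the orbit of `1`, which is the whole group, is bounded, so word length is bounded. -/

section WordSet

variable {H : Type*} [Group H] {Y : Set H} {m n : ℕ} {a b h : H}

theorem mem_wordSet_iff_exists_list :
    h ∈ wordSet Y n ↔
      ∃ l : List H, l.length ≤ n ∧ (∀ x ∈ l, x ∈ Y ∨ x⁻¹ ∈ Y) ∧ l.prod = h := by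
  constructor
  · rintro ⟨m, hm, g, hg, rfl⟩
    exact ⟨List.ofFn g, by rwa [List.length_ofFn], List.forall_mem_ofFn_iff.2 hg, rfl⟩
  · rintro ⟨l, hl, hY, rfl⟩
    exact ⟨l.length, hl, l.get, fun i => hY _ (l.get_mem i), by rw [List.ofFn_get]⟩

theorem wordSet_mono (Y : Set H) : Monotone (wordSet Y) :=
  fun _ _ hmn _ ⟨k, hk, hg⟩ => ⟨k, hk.trans hmn, hg⟩

theorem wordSet_zero (Y : Set H) : wordSet Y 0 = {1} := by
  ext h
  simp [mem_wordSet_iff_exists_list, eq_comm]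

theorem mul_mem_wordSet (ha : a ∈ wordSet Y m) (hb : b ∈ wordSet Y n) :
    a * b ∈ wordSet Y (m + n) := by
  obtain ⟨l, hl, hlY, rfl⟩ := mem_wordSet_iff_exists_list.1 ha
  obtain ⟨k, hk, hkY, rfl⟩ := mem_wordSet_iff_exists_list.1 hb
  refine mem_wordSet_iff_exists_list.2 ⟨l ++ k, ?_, ?_, List.prod_append⟩
  · rw [List.length_append]
    exact add_le_add hl hk
  · exact List.forall_mem_append.2 ⟨hlY, hkY⟩

theorem inv_mem_wordSet (hh : h ∈ wordSet Y n) : h⁻¹ ∈ wordSet Y n := by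
  obtain ⟨l, hl, hlY, rfl⟩ := mem_wordSet_iff_exists_list.1 hh
  refine mem_wordSet_iff_exists_list.2
    ⟨(l.map (·⁻¹)).reverse, ?_, fun x hx => ?_, (List.prod_inv_reverse l).symm⟩
  · rwa [List.length_reverse, List.length_map]
  · obtain ⟨y, hy, rfl⟩ := List.mem_map.1 (List.mem_reverse.1 hx)
    rw [inv_inv]
    exact (hlY y hy).symm

theorem inv_mem_wordSet_iff : h⁻¹ ∈ wordSet Y n ↔ h ∈ wordSet Y n :=
  ⟨fun hh => inv_inv h ▸ inv_mem_wordSet hh, inv_mem_wordSet⟩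

theorem exists_mem_wordSet_of_mem_closure (hh : h ∈ Subgroup.closure Y) :
    ∃ n, h ∈ wordSet Y n := by
  rw [← Subgroup.mem_toSubmonoid, Subgroup.closure_toSubmonoid] at hh
  obtain ⟨l, hl, hprod⟩ := Submonoid.exists_list_of_mem_closure hh
  exact ⟨l.length, mem_wordSet_iff_exists_list.2 ⟨l, le_rfl, hl, hprod⟩⟩

end WordSet

section WordLength

variable {H : Type*} [Group H] {Y : Set H}

/-- The word length of `h` with respect to `Y`: the least `n` with `h ∈ wordSet Y n`, and `0` if
`h` is not in the subgroup generated by `Y`. -/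
noncomputable def wordLength (Y : Set H) (h : H) : ℕ :=
  sInf {n | h ∈ wordSet Y n}

theorem wordLength_le_iff (hY : Subgroup.closure Y = ⊤) {h : H} {n : ℕ} :
    wordLength Y h ≤ n ↔ h ∈ wordSet Y n := by
  have hmem : h ∈ wordSet Y (wordLength Y h) :=
    Nat.sInf_mem (exists_mem_wordSet_of_mem_closure (hY ▸ Subgroup.mem_top h))
  exact ⟨fun hle => wordSet_mono Y hle hmem, fun hh => Nat.sInf_le hh⟩

theorem wordLength_eq_zero_iff (hY : Subgroup.closure Y = ⊤) {h : H} :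
    wordLength Y h = 0 ↔ h = 1 := by
  rw [← Nat.le_zero, wordLength_le_iff hY, wordSet_zero, Set.mem_singleton_iff]

theorem wordLength_mul_le (hY : Subgroup.closure Y = ⊤) (a b : H) :
    wordLength Y (a * b) ≤ wordLength Y a + wordLength Y b :=
  (wordLength_le_iff hY).2 <|
    mul_mem_wordSet ((wordLength_le_iff hY).1 le_rfl) ((wordLength_le_iff hY).1 le_rfl)

theorem wordLength_inv (Y : Set H) (h : H) : wordLength Y h⁻¹ = wordLength Y h := by
  simp only [wordLength, inv_mem_wordSet_iff]

/-- Word length with respect to a generating set, as a real-valued group norm; it induces the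
left-invariant word metric. -/
noncomputable def wordNorm (Y : Set H) (hY : Subgroup.closure Y = ⊤) : GroupNorm H where
  toFun h := wordLength Y h
  map_one' := Nat.cast_eq_zero.2 ((wordLength_eq_zero_iff hY).2 rfl)
  mul_le' a b := mod_cast wordLength_mul_le hY a b
  inv' h := congrArg Nat.cast (wordLength_inv Y h)
  eq_one_of_map_eq_zero' _ hh := (wordLength_eq_zero_iff hY).1 (Nat.cast_eq_zero.1 hh)

theorem wordNorm_apply (hY : Subgroup.closure Y = ⊤) (h : H) :
    wordNorm Y hY h = wordLength Y h :=
  rfl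

end WordLength

theorem StronglyBounded.exists_groupNorm_le {H : Type} [Group H] (hsb : StronglyBounded H)
    (f : GroupNorm H) : ∃ C : ℝ, ∀ h, f h ≤ C := by
  let _ : NormedGroup H := f.toNormedGroup
  have horbit : Bornology.IsBounded (MulAction.orbit H (1 : H)) :=
    hsb H inferInstance inferInstance (isometry_smul H) 1
  obtain ⟨C, hC⟩ := horbit.exists_norm_le'
  exact ⟨C, fun h => hC h ⟨h, mul_one h⟩⟩

theorem StronglyBounded.exists_wordSet_eq_univ {H : Type} [Group H] (hsb : StronglyBounded H)
    {Y : Set H} (hY : Subgroup.closure Y = ⊤) : ∃ n, wordSet Y n = Set.univ := by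
  obtain ⟨C, hC⟩ := hsb.exists_groupNorm_le (wordNorm Y hY)
  refine ⟨⌊C⌋₊, Set.eq_univ_of_forall fun h => (wordLength_le_iff hY).1 (Nat.le_floor ?_)⟩
  exact wordNorm_apply hY h ▸ hC h

theorem Jonsson.closure_eq_top {H : Type*} [Group H] (hj : Jonsson H) {Y : Set H}
    (hY : Cardinal.mk Y = Cardinal.mk H) : Subgroup.closure Y = ⊤ := by
  by_contra hne
  have hle : Cardinal.mk Y ≤ Cardinal.mk (Subgroup.closure Y) :=
    Cardinal.mk_le_mk_of_subset Subgroup.subset_closure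
  exact (hle.trans_lt (hj _ hne)).ne hY

theorem stronglyBounded_jonsson_imp_bounded_generation_general {H : Type} [Group H]
    (hsb : StronglyBounded H) (hj : Jonsson H) :
    ∀ Y : Set H, Cardinal.mk Y = Cardinal.mk H →
      ∃ n : ℕ, wordSet Y n = Set.univ :=
  fun _ hY => hsb.exists_wordSet_eq_univ (hj.closure_eq_top hY)

theorem stronglyBounded_jonsson_imp_bounded_generation {H : Type} [Group H]
    (hcof : Cardinal.aleph0 < (Cardinal.mk H).ord.cof)
    (hsb : StronglyBounded H) (hj : Jonsson H) :
    ∀ Y : Set H, Cardinal.mk Y = Cardinal.mk H →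
      ∃ n : ℕ, wordSet Y n = Set.univ :=
  stronglyBounded_jonsson_imp_bounded_generation_general hsb hj
end

section
/- Let H be a group such that the cardinality of H has uncountable cofinality. If for every subset Y ⊆ H with |Y| = |H| there exists a natural number n_Y such that H = Y^{[n_Y]}, then H is strongly bounded and Jónsson. -/
/-!
For a subgroup `K`, products of elements of `K` stay in `K`, so bounded generation by sets of full
cardinality leaves no room for a proper subgroup of full cardinality. For an isometric action, the
displacement `h ↦ dist (h • x) x` is a seminorm on `H`. Its rounded-up values are natural numbers,
so by uncountable cofinality one of them, `N`, is taken on a whole set `Y` of full cardinality; then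
`H = Y^{[n]}` bounds the displacement by `n * N` everywhere.
-/

section WordSet

variable {H : Type*} [Group H]

theorem wordSet_subset_closure (Y : Set H) (n : ℕ) : wordSet Y n ⊆ Subgroup.closure Y := by
  rintro _ ⟨m, -, g, hg, rfl⟩
  refine list_prod_mem fun a ha => ?_
  obtain ⟨i, rfl⟩ := List.mem_ofFn.1 ha
  exact (hg i).elim (Subgroup.mem_closure_of_mem ·)
    fun hi => inv_mem_iff.1 (Subgroup.mem_closure_of_mem hi)

theorem closure_eq_top_of_wordSet_eq_univ {Y : Set H} {n : ℕ} (hY : wordSet Y n = Set.univ) :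
    Subgroup.closure Y = ⊤ :=
  (Subgroup.eq_top_iff' _).2 fun h => wordSet_subset_closure Y n (hY ▸ Set.mem_univ h)

theorem seminorm_le_mul_of_mem_wordSet (p : GroupSeminorm H) {Y : Set H} {n : ℕ} {c : ℝ}
    (hc : 0 ≤ c) (hY : ∀ y ∈ Y, p y ≤ c) {h : H} (hh : h ∈ wordSet Y n) : p h ≤ n * c := by
  obtain ⟨m, hm, g, hg, rfl⟩ := hh
  have hletter : ∀ i, p (g i) ≤ c := fun i =>
    (hg i).elim (hY _) fun hi => map_inv_eq_map p (g i) ▸ hY _ hi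
  calc p (List.ofFn g).prod
      ≤ ((List.ofFn g).map p).sum :=
        List.apply_prod_le_sum_map _ _ (map_one_eq_zero p).le (map_mul_le_add p)
    _ = ∑ i, p (g i) := by rw [List.map_ofFn, List.sum_ofFn]; rfl
    _ ≤ ∑ _i : Fin m, c := Finset.sum_le_sum fun i _ => hletter i
    _ = m * c := by simp
    _ ≤ n * c := by gcongr

end WordSet

universe u v

theorem exists_mk_fiber_eq_of_aleph0_lt_cof {α : Type u} {β : Type v} [Countable β]
    (hcof : Cardinal.aleph0 < (Cardinal.mk α).ord.cof) (f : α → β) :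
    ∃ b, Cardinal.mk (f ⁻¹' {b}) = Cardinal.mk α := by
  have hinf : Cardinal.aleph0 ≤ Cardinal.mk α := hcof.le.trans (Ordinal.cof_ord_le _)
  -- `Cardinal.infinite_pigeonhole` needs the codomain in the universe of `α`.
  have : Countable (Shrink.{u} β) := (equivShrink.{u} β).symm.injective.countable
  obtain ⟨b, hb⟩ := Cardinal.infinite_pigeonhole (equivShrink.{u} β ∘ f) hinf
    (Cardinal.mk_le_aleph0.trans_lt hcof)
  refine ⟨(equivShrink.{u} β).symm b, ?_⟩
  rwa [Set.preimage_comp, ← Equiv.image_symm_eq_preimage, Set.image_singleton] at hb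

/-- The displacement of a point `x` under an isometric action, as a seminorm on the acting group:
it measures how far each group element moves `x`. -/
def displacementSeminorm (H : Type*) {X : Type*} [Group H] [PseudoMetricSpace X] [MulAction H X]
    [IsIsometricSMul H X] (x : X) : GroupSeminorm H where
  toFun h := dist (h • x) x
  map_one' := by simp
  mul_le' g h := calc
    dist ((g * h) • x) x ≤ dist ((g * h) • x) (g • x) + dist (g • x) x := dist_triangle _ _ _
    _ = dist (g • x) x + dist (h • x) x := by rw [mul_smul, dist_smul, add_comm]
  inv' h := by rw [← dist_smul h, smul_inv_smul, dist_comm]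

section BoundedGeneration

variable {H : Type*} [Group H]

theorem jonsson_of_forall_exists_wordSet_eq_univ
    (hgen : ∀ Y : Set H, Cardinal.mk Y = Cardinal.mk H → ∃ n : ℕ, wordSet Y n = Set.univ) :
    Jonsson H := by
  intro K hK
  refine (Cardinal.mk_set_le (K : Set H)).lt_of_ne fun hcard => hK ?_
  obtain ⟨n, hn⟩ := hgen K hcard
  rw [← K.closure_eq, closure_eq_top_of_wordSet_eq_univ hn]

theorem bddAbove_range_seminorm_of_forall_exists_wordSet_eq_univ
    (hcof : Cardinal.aleph0 < (Cardinal.mk H).ord.cof)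
    (hgen : ∀ Y : Set H, Cardinal.mk Y = Cardinal.mk H → ∃ n : ℕ, wordSet Y n = Set.univ)
    (p : GroupSeminorm H) : BddAbove (Set.range p) := by
  obtain ⟨N, hN⟩ := exists_mk_fiber_eq_of_aleph0_lt_cof hcof fun h => ⌈p h⌉₊
  obtain ⟨n, hn⟩ := hgen _ hN
  have hle : ∀ h ∈ (fun h => ⌈p h⌉₊) ⁻¹' {N}, p h ≤ N := fun _ hh => Nat.ceil_le.1 hh.le
  refine ⟨n * N, Set.forall_mem_range.2 fun h => ?_⟩
  exact seminorm_le_mul_of_mem_wordSet p N.cast_nonneg hle (hn ▸ Set.mem_univ h)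

end BoundedGeneration

theorem isBounded_orbit_of_bddAbove_displacementSeminorm {H X : Type*} [Group H]
    [PseudoMetricSpace X] [MulAction H X] [IsIsometricSMul H X] {x : X}
    (hx : BddAbove (Set.range (displacementSeminorm H x))) :
    Bornology.IsBounded (MulAction.orbit H x) := by
  obtain ⟨r, hr⟩ := hx
  exact Metric.isBounded_closedBall.subset <|
    Set.range_subset_iff.2 fun h => Metric.mem_closedBall.2 (hr ⟨h, rfl⟩)

theorem bounded_generation_imp_stronglyBounded_jonsson_general {H : Type*} [Group H]
    (hcof : Cardinal.aleph0 < (Cardinal.mk H).ord.cof)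
    (hgen : ∀ Y : Set H, Cardinal.mk Y = Cardinal.mk H →
      ∃ n : ℕ, wordSet Y n = Set.univ) :
    (∀ (X : Type*) [PseudoMetricSpace X] [MulAction H X] [IsIsometricSMul H X] (x : X),
      Bornology.IsBounded (MulAction.orbit H x)) ∧ Jonsson H :=
  ⟨fun _ _ _ _ x => isBounded_orbit_of_bddAbove_displacementSeminorm <|
    bddAbove_range_seminorm_of_forall_exists_wordSet_eq_univ hcof hgen (displacementSeminorm H x),
    jonsson_of_forall_exists_wordSet_eq_univ hgen⟩

theorem bounded_generation_imp_stronglyBounded_jonsson {H : Type} [Group H]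
    (hcof : Cardinal.aleph0 < (Cardinal.mk H).ord.cof)
    (hgen : ∀ Y : Set H, Cardinal.mk Y = Cardinal.mk H →
      ∃ n : ℕ, wordSet Y n = Set.univ) :
    StronglyBounded H ∧ Jonsson H :=
  have ⟨hbdd, hjonsson⟩ := bounded_generation_imp_stronglyBounded_jonsson_general hcof hgen
  ⟨fun X _ _ hiso x => have : IsIsometricSMul H X := ⟨hiso⟩; hbdd X x, hjonsson⟩
end
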